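/- arXiv:1404.3378 — 4 statements merged into one kernel-verified Lean document; each statement's English description precedes it below -/
import Mathlib

section
/- Let n ≥ 1 and let X_1, …, X_n be {0,1}-valued random variables on a probability space such that for every subset S ⊆ [n], Pr(∀ i ∈ S, X_i = 1) ≤ α^{|S|}. Then for every β with α < β ≤ 1, Pr( (1/n)·∑_{i=1}^n X_i ≥ β ) ≤ exp(−2(β − α)² n). -/
open MeasureTheory ProbabilityTheory

lemma hoeffding_bernoulli_aux (a t : ℝ) (h0 : 0 ≤ a) (h1 : a ≤ 1) :
    1 + (Real.exp t - 1) * a ≤ Real.exp (t * a + t ^ 2 / 8) := by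
  let μ : Measure ℝ := ENNReal.ofReal (1 - a) • Measure.dirac 0 + ENNReal.ofReal a • Measure.dirac 1
  have hμ : IsProbabilityMeasure μ := ⟨by
    simp only [μ, Measure.add_apply, Measure.smul_apply, measure_univ, smul_eq_mul, mul_one]
    rw [← ENNReal.ofReal_add (by linarith) h0]; simp⟩
  have hint : ∀ f : ℝ → ℝ, ∫ x, f x ∂μ = (1 - a) * f 0 + a * f 1 := by
    intro f
    have hd : ∀ (c x : ℝ), Integrable f (ENNReal.ofReal c • Measure.dirac x) := fun c x =>
      (integrable_dirac (by simp)).smul_measure (by simp)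
    rw [integral_add_measure (hd _ _) (hd _ _), integral_smul_measure, integral_smul_measure,
      integral_dirac, integral_dirac, ENNReal.toReal_ofReal (by linarith),
      ENNReal.toReal_ofReal h0]
    simp
  have hb : ∀ᵐ x ∂μ, (id x : ℝ) ∈ Set.Icc (0 : ℝ) 1 := by
    simp only [μ]
    rw [ae_add_measure_iff]
    constructor
    · exact Measure.ae_smul_measure (by simp [ae_dirac_eq]) _
    · exact Measure.ae_smul_measure (by simp [ae_dirac_eq]) _
  have h := (hasSubgaussianMGF_of_mem_Icc (μ := μ) (X := id) aemeasurable_id hb).mgf_le t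
  rw [mgf, hint, hint] at h
  simp at h
  have e1 : Real.exp (-(t * a)) * (1 + (Real.exp t - 1) * a) ≤ Real.exp (t ^ 2 / 8) := by
    calc _ = (1 - a) * Real.exp (-(t * a)) + a * Real.exp (t * (1 - a)) := by
          rw [show t * (1 - a) = t + -(t * a) by ring, Real.exp_add]; ring
      _ ≤ _ := h
      _ = _ := by congr 1; ring
  rw [Real.exp_add]
  calc _ = Real.exp (t * a) * (Real.exp (-(t * a)) * (1 + (Real.exp t - 1) * a)) := by
        rw [← mul_assoc, ← Real.exp_add]; simp
    _ ≤ _ := by gcongr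

/-- Linial–Luria Chernoff-type bound (sub-Gaussian form): if `X_1,…,X_n` are
`{0,1}`-valued random variables such that for every subset `S ⊆ [n]` we have
`Pr(∀ i ∈ S, X_i = 1) ≤ α^|S|`, then for every `β` with `α < β ≤ 1`,
`Pr((1/n)·∑ X_i ≥ β) ≤ exp(−2(β−α)²n)`. -/
theorem linial_luria_subgaussian {Ω : Type*} [MeasureSpace Ω]
    [IsProbabilityMeasure (ℙ : Measure Ω)]
    (n : ℕ) (hn : 1 ≤ n) (X : Fin n → Ω → ℝ)
    (hmeas : ∀ i, Measurable (X i))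
    (hval : ∀ i ω, X i ω = 0 ∨ X i ω = 1)
    (α β : ℝ) (hα : 0 ≤ α) (hαβ : α < β) (hβ : β ≤ 1)
    (hmom : ∀ S : Finset (Fin n),
      ℙ {ω | ∀ i ∈ S, X i ω = 1} ≤ ENNReal.ofReal (α ^ S.card)) :
    ℙ {ω | β ≤ (1 / n) * ∑ i, X i ω} ≤
      ENNReal.ofReal (Real.exp (-2 * (β - α) ^ 2 * n)) := by
  set t : ℝ := 4 * (β - α) with ht
  have ht0 : 0 ≤ t := by linarith
  set c : ℝ := Real.exp t - 1 with hc
  have hc0 : 0 ≤ c := by have := Real.one_le_exp ht0; linarith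
  have hn0 : (0 : ℝ) < n := by exact_mod_cast hn
  have hms : ∀ S : Finset (Fin n), MeasurableSet {ω | ∀ i ∈ S, X i ω = 1} := by
    intro S
    have : {ω | ∀ i ∈ S, X i ω = 1} = ⋂ i ∈ S, (X i) ⁻¹' {1} := by ext; simp
    rw [this]
    exact Finset.measurableSet_biInter _ fun i _ => hmeas i (measurableSet_singleton _)
  have hprod : ∀ (S : Finset (Fin n)) ω, ∏ i ∈ S, (c * X i ω) =
      c ^ S.card * Set.indicator {ω | ∀ i ∈ S, X i ω = 1} (fun _ => (1 : ℝ)) ω := by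
    intro S ω
    rw [Finset.prod_mul_distrib, Finset.prod_const]
    congr 1
    by_cases h : ∀ i ∈ S, X i ω = 1
    · rw [Set.indicator_of_mem (by exact h), Finset.prod_congr rfl h]; simp
    · rw [Set.indicator_of_notMem (by exact h)]
      push Not at h
      obtain ⟨i, hi, hne⟩ := h
      exact Finset.prod_eq_zero hi ((hval i ω).resolve_right hne)
  have hexp : ∀ ω, Real.exp (t * ∑ i, X i ω) = ∑ S : Finset (Fin n),
      c ^ S.card * Set.indicator {ω | ∀ i ∈ S, X i ω = 1} (fun _ => (1 : ℝ)) ω := by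
    intro ω
    simp_rw [← hprod]
    rw [Finset.mul_sum, Real.exp_sum, ← Finset.powerset_univ, ← Finset.prod_one_add]
    refine Finset.prod_congr rfl fun i _ => ?_
    rcases hval i ω with h | h <;> simp [h, hc]
  have hI : ∀ S : Finset (Fin n), Integrable (fun ω => c ^ S.card *
      Set.indicator {ω | ∀ i ∈ S, X i ω = 1} (fun _ => (1 : ℝ)) ω) (ℙ : Measure Ω) := fun S =>
    ((integrable_const 1).indicator (hms S)).const_mul _
  have hint : Integrable (fun ω => Real.exp (t * ∑ i, X i ω)) (ℙ : Measure Ω) := by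
    simp_rw [hexp]
    exact integrable_finset_sum _ fun S _ => hI S
  have hE : ∫ ω, Real.exp (t * ∑ i, X i ω) ≤ (1 + c * α) ^ n := by
    simp_rw [hexp]
    rw [integral_finset_sum _ fun S _ => hI S]
    calc _ ≤ ∑ S : Finset (Fin n), ∏ i ∈ S, (c * α) := by
          refine Finset.sum_le_sum fun S _ => ?_
          rw [integral_const_mul, integral_indicator_const _ (hms S), Finset.prod_const, mul_pow]
          simp only [smul_eq_mul, mul_one]
          gcongr
          exact ENNReal.toReal_le_of_le_ofReal (by positivity) (hmom S)
      _ = _ := by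
          rw [← Finset.powerset_univ, ← Finset.prod_one_add]; simp
  have hM := mul_meas_ge_le_integral_of_nonneg (μ := (ℙ : Measure Ω))
    (Filter.Eventually.of_forall fun ω => (Real.exp_pos (t * ∑ i, X i ω)).le) hint
    (Real.exp (t * (β * n)))
  have hsub : {ω | β ≤ (1 / n) * ∑ i, X i ω} ⊆
      {ω | Real.exp (t * (β * n)) ≤ Real.exp (t * ∑ i, X i ω)} := by
    intro ω hω
    simp only [Set.mem_setOf_eq] at hω ⊢
    rw [one_div, inv_mul_eq_div, le_div_iff₀ hn0] at hω
    gcongr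
  refine (measure_mono hsub).trans ?_
  rw [← ofReal_measureReal]
  apply ENNReal.ofReal_le_ofReal
  have hH := hoeffding_bernoulli_aux α t hα (by linarith)
  have hfin : Real.exp (t * (β * n)) * (ℙ : Measure Ω).real
      {ω | Real.exp (t * (β * n)) ≤ Real.exp (t * ∑ i, X i ω)} ≤
      Real.exp (t * (β * n)) * Real.exp (-2 * (β - α) ^ 2 * n) := by
    calc _ ≤ _ := hM
      _ ≤ _ := hE
      _ ≤ (Real.exp (t * α + t ^ 2 / 8)) ^ n := by gcongr
      _ = _ := by
        rw [← Real.exp_nat_mul, ← Real.exp_add]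
        congr 1
        rw [ht]; ring
  exact le_of_mul_le_mul_left hfin (Real.exp_pos _)
end

section
/- Let n ≥ 1 and let X_1, …, X_n be {0,1}-valued random variables on a probability space such that for every subset S ⊆ [n], Pr(∀ i ∈ S, X_i = 1) ≤ α^{|S|}. Then for every β with α < β < 1, Pr( (1/n)·∑_{i=1}^n X_i ≥ β ) ≤ exp(−n·D(β‖α)), where D(β‖α) = β·ln(β/α) + (1−β)·ln((1−β)/(1−α)). -/
open MeasureTheory ProbabilityTheory

/-- Linial–Luria Chernoff-type bound (Kullback–Leibler form): if `X_1,…,X_n` are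
`{0,1}`-valued random variables such that for every subset `S ⊆ [n]` we have
`Pr(∀ i ∈ S, X_i = 1) ≤ α^|S|`, then for every `β` with `α < β < 1`,
`Pr((1/n)·∑ X_i ≥ β) ≤ exp(−n·D(β‖α))`, where
`D(β‖α) = β·ln(β/α) + (1−β)·ln((1−β)/(1−α))`. -/
theorem linial_luria_kl {Ω : Type*} [MeasureSpace Ω]
    [IsProbabilityMeasure (ℙ : Measure Ω)]
    (n : ℕ) (hn : 1 ≤ n) (X : Fin n → Ω → ℝ)
    (hmeas : ∀ i, Measurable (X i))
    (hval : ∀ i ω, X i ω = 0 ∨ X i ω = 1)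
    (α β : ℝ) (hα : 0 < α) (hαβ : α < β) (hβ : β < 1)
    (hmom : ∀ S : Finset (Fin n),
      ℙ {ω | ∀ i ∈ S, X i ω = 1} ≤ ENNReal.ofReal (α ^ S.card)) :
    ℙ {ω | β ≤ (1 / n) * ∑ i, X i ω} ≤
      ENNReal.ofReal (Real.exp (-(n : ℝ) *
        (β * Real.log (β / α) + (1 - β) * Real.log ((1 - β) / (1 - α))))) := by
  have hα1 : α < 1 := hαβ.trans hβ
  have h1α : 0 < 1 - α := by linarith
  have h1β : 0 < 1 - β := by linarith
  have hβ0 : 0 < β := hα.trans hαβ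
  have hn0 : (0 : ℝ) < n := by exact_mod_cast hn
  set L : ℝ := Real.log (β / α) - Real.log ((1 - β) / (1 - α)) with hL
  set s : ℝ := Real.exp L - 1 with hs
  have hexpL : Real.exp L = β * (1 - α) / (α * (1 - β)) := by
    rw [hL, Real.exp_sub, Real.exp_log (by positivity), Real.exp_log (by positivity)]
    field_simp
  have hL0 : 0 ≤ L := by
    have h1 : 0 ≤ Real.log (β / α) := Real.log_nonneg (by rw [le_div_iff₀ hα]; linarith)
    have h2 : Real.log ((1 - β) / (1 - α)) ≤ 0 :=
      Real.log_nonpos (by positivity) (by rw [div_le_one h1α]; linarith)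
    linarith
  have hs0 : 0 ≤ s := by
    have := Real.add_one_le_exp L
    linarith
  have hsα : s * α + 1 = Real.exp (-Real.log ((1 - β) / (1 - α))) := by
    rw [Real.exp_neg, Real.exp_log (by positivity), hs, hexpL]
    field_simp
    ring
  have hA : ∀ S : Finset (Fin n), MeasurableSet {ω | ∀ i ∈ S, X i ω = 1} := by
    intro S
    have : {ω | ∀ i ∈ S, X i ω = 1} = ⋂ i ∈ S, X i ⁻¹' {1} := by
      ext ω; simp
    rw [this]
    exact Finset.measurableSet_biInter _ fun i _ => hmeas i (measurableSet_singleton 1)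
  have hpt : ∀ ω, Real.exp (L * ∑ i, X i ω) =
      ∑ S : Finset (Fin n), s ^ S.card * ({ω | ∀ i ∈ S, X i ω = 1}.indicator (fun _ => (1 : ℝ)) ω) := by
    intro ω
    have h1 : Real.exp (L * ∑ i, X i ω) = ∏ i, (1 + s * X i ω) := by
      rw [Finset.mul_sum, Real.exp_sum]
      refine Finset.prod_congr rfl fun i _ => ?_
      rcases hval i ω with h | h <;> simp [h, hs]
    rw [h1, Finset.prod_one_add, Finset.powerset_univ]
    refine Finset.sum_congr rfl fun S _ => ?_
    rw [Finset.prod_mul_distrib, Finset.prod_const]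
    congr 1
    by_cases h : ∀ i ∈ S, X i ω = 1
    · rw [Set.indicator_of_mem (by exact h), Finset.prod_eq_one h]
    · rw [Set.indicator_of_notMem (by exact h)]
      push Not at h
      obtain ⟨i, hi, hne⟩ := h
      exact Finset.prod_eq_zero hi ((hval i ω).resolve_right hne)
  have hint : ∀ S : Finset (Fin n), Integrable (fun ω => s ^ S.card *
      ({ω | ∀ i ∈ S, X i ω = 1}.indicator (fun _ => (1 : ℝ)) ω)) (ℙ : Measure Ω) := fun S =>
    ((integrable_const (1 : ℝ)).indicator (hA S)).const_mul _
  have hI : Integrable (fun ω => Real.exp (L * ∑ i, X i ω)) (ℙ : Measure Ω) := by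
    simp_rw [hpt]
    exact integrable_finsetSum _ fun S _ => hint S
  have hE : ∫ ω, Real.exp (L * ∑ i, X i ω) ∂(ℙ : Measure Ω) ≤ (s * α + 1) ^ n := by
    simp_rw [hpt]
    rw [integral_finsetSum _ fun S _ => hint S]
    have h2 : (s * α + 1) ^ n = ∑ S : Finset (Fin n), s ^ S.card * α ^ S.card := by
      have := Finset.prod_one_add (f := fun _ : Fin n => s * α) (s := Finset.univ)
      simp only [Finset.prod_const, Finset.card_univ, Fintype.card_fin, Finset.powerset_univ,
        mul_pow] at this
      rw [add_comm, this]
    rw [h2]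
    refine Finset.sum_le_sum fun S _ => ?_
    rw [integral_const_mul, integral_indicator_const _ (hA S)]
    have : (ℙ : Measure Ω).real {ω | ∀ i ∈ S, X i ω = 1} ≤ α ^ S.card :=
      ENNReal.toReal_le_of_le_ofReal (by positivity) (hmom S)
    simp only [smul_eq_mul, mul_one]
    gcongr
  have hM := mul_meas_ge_le_integral_of_nonneg (μ := (ℙ : Measure Ω))
    (Filter.Eventually.of_forall fun ω => (Real.exp_pos (L * ∑ i, X i ω)).le) hI
    (Real.exp (L * (n * β)))
  have hsub : {ω | β ≤ (1 / n) * ∑ i, X i ω} ⊆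
      {ω | Real.exp (L * (n * β)) ≤ Real.exp (L * ∑ i, X i ω)} := by
    intro ω hω
    simp only [Set.mem_setOf_eq] at hω ⊢
    rw [one_div, inv_mul_eq_div, le_div_iff₀ hn0] at hω
    apply Real.exp_le_exp.mpr
    apply mul_le_mul_of_nonneg_left _ hL0
    linarith
  refine (measure_mono hsub).trans ?_
  rw [← ENNReal.ofReal_toReal (measure_ne_top _ _)]
  apply ENNReal.ofReal_le_ofReal
  have h3 := hM.trans hE
  rw [hsα, ← Real.exp_nat_mul, mul_comm, ← le_div_iff₀ (Real.exp_pos _), ← Real.exp_sub] at h3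
  refine h3.trans (le_of_eq ?_)
  congr 1
  rw [hL]
  ring
end

section
/- Let K, n ≥ 1 and let P : {±1}^K → {0,1} be a function computed by a DNF formula with T clauses over K variables, i.e., P(z) = ⋁_{t=1}^{T} ⋀_{r=1}^{R_t} [z_{j_{t,r}} = b_{t,r}] for some indices j_{t,r} ∈ [K] and signs b_{t,r} ∈ {±1}. Then for every assignment ψ ∈ {±1}^n there exists a DNF formula h with T clauses over the variable set [K] × {±1} × [n] such that for every x ∈ X_{n,K}, h(g(x)) = P(U_x(ψ)). -/
/-- A signed `K`-tuple over `[n]`. -/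
def SignedTuple (n K : ℕ) : Type := (Fin K → Bool) × (Fin K ↪ Fin n)

/-- `U_x(ψ) = (α_1·ψ_{i_1}, …, α_K·ψ_{i_K})`, where `true` encodes `+1`. -/
def Ux {n K : ℕ} (x : SignedTuple n K) (ψ : Fin n → Bool) : Fin K → Bool :=
  fun j => x.1 j == ψ (x.2 j)

/-- A DNF clause over a variable set `V` is a list of literals `[z_v = c]`;
it evaluates to `1` on `w : V → {±1}` iff every listed coordinate has its
specified sign. -/
def evalClause {V : Type*} (c : List (V × Bool)) (w : V → Bool) : Bool :=
  c.all fun l => w l.1 == l.2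

/-- A DNF formula is a disjunction of DNF clauses. -/
def evalDNF {V : Type*} (φ : List (List (V × Bool))) (w : V → Bool) : Bool :=
  φ.any fun c => evalClause c w

/-- The encoding `g : X_{n,K} → {±1}^{[K]×{±1}×[n]}`: `g_{j,b,i}(x) = −1` iff
`x(j) = (−b, i)` (with `true` encoding `+1` and `!b` encoding `−b`). -/
def gmap {n K : ℕ} (x : SignedTuple n K) : Fin K × Bool × Fin n → Bool :=
  fun v => !(x.1 v.1 == !v.2.1 && x.2 v.1 == v.2.2)

/-- Lemma 3.4 (non-uniform version): if `P : {±1}^K → {0,1}` is computed by a DNF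
formula with `T` clauses, then for every assignment `ψ ∈ {±1}^n` there is a DNF
formula `h` with `T` clauses over the variable set `[K] × {±1} × [n]` such that
`h(g(x)) = P(U_x(ψ))` for every `x ∈ X_{n,K}`. -/
theorem dnf_realization (K n T : ℕ) (hK : 1 ≤ K) (hn : 1 ≤ n)
    (P : (Fin K → Bool) → Bool)
    (φ : List (List (Fin K × Bool))) (hφ : φ.length = T)
    (hP : ∀ z, P z = evalDNF φ z) (ψ : Fin n → Bool) :
    ∃ h : List (List ((Fin K × Bool × Fin n) × Bool)),
      h.length = T ∧ ∀ x : SignedTuple n K, evalDNF h (gmap x) = P (Ux x ψ) := by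
  refine ⟨φ.map fun c => c.flatMap fun l =>
    (List.finRange n).map fun i => ((l.1, (l.2 == ψ i), i), true), by simpa using hφ, ?_⟩
  intro x
  rw [hP]
  unfold evalDNF
  rw [List.any_map]
  congr 1
  funext c
  simp only [Function.comp, evalClause, List.all_flatMap, List.all_map]
  congr 1
  funext l
  rw [Bool.eq_iff_iff, List.all_eq_true]
  simp only [List.mem_finRange, true_imp_iff, gmap, Ux, Function.comp]
  constructor
  · intro h
    have := h (x.2 l.1)
    revert this
    cases x.1 l.1 <;> cases l.2 <;> cases ψ (x.2 l.1) <;> simp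
  · intro h i
    by_cases hi : x.2 l.1 = i
    · subst hi
      revert h
      cases x.1 l.1 <;> cases l.2 <;> cases ψ (x.2 l.1) <;> simp
    · simp [hi]
end

section
/- Let K, n ≥ 1, let C : {±1}^K → {0,1} be a conjunction of literals, C(z) = ⋀_{r=1}^{l} [z_{j_r} = b_r] with j_r ∈ [K] and b_r ∈ {±1}, and let ψ ∈ {±1}^n. Define the conjunction of literals h' over the variable set [K] × {±1} × [n] by h'(w) = ⋀_{r=1}^{l} ⋀_{i=1}^{n} [w_{(j_r, ψ_i·b_r, i)} = 1]. Then for every x ∈ X_{n,K}, h'(g(x)) = C(U_x(ψ)). -/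
/-- Per-clause identity from Lemma 3.4: for a conjunction of literals
`C(z) = ⋀_r [z_{j_r} = b_r]` and an assignment `ψ`, the conjunction of literals
`h'(w) = ⋀_r ⋀_i [w_{(j_r, ψ_i·b_r, i)} = +1]` satisfies `h'(g(x)) = C(U_x(ψ))`
for every `x ∈ X_{n,K}` (the sign `ψ_i·b_r` is `+1` iff `ψ_i = b_r`). -/
theorem clause_realization (K n : ℕ) (hK : 1 ≤ K) (hn : 1 ≤ n)
    (c : List (Fin K × Bool)) (ψ : Fin n → Bool) (x : SignedTuple n K) :
    evalClause
      (c.flatMap fun l =>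
        (List.finRange n).map fun i => (((l.1, (ψ i == l.2), i) :
          Fin K × Bool × Fin n), true))
      (gmap x) = evalClause c (Ux x ψ) := by
  have key : ∀ l : Fin K × Bool,
      (((List.finRange n).map fun i => (((l.1, (ψ i == l.2), i) :
          Fin K × Bool × Fin n), true)).all fun m => gmap x m.1 == m.2)
        = (Ux x ψ l.1 == l.2) := by
    rintro ⟨j, b⟩
    rw [Bool.eq_iff_iff]
    simp only [List.all_map, List.all_eq_true, List.mem_finRange, Function.comp, gmap, Ux,
      true_imp_iff]
    constructor
    · intro h
      have h1 := h (x.2 j)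
      revert h1
      cases x.1 j <;> cases ψ (x.2 j) <;> cases b <;> simp
    · intro h i
      by_cases hi : x.2 j = i
      · subst hi
        revert h
        cases x.1 j <;> cases ψ (x.2 j) <;> cases b <;> simp
      · simp [hi]
  unfold evalClause
  rw [List.all_flatMap]
  congr 1
  funext l
  exact key l
end
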